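/- For all A, B ∈ A the following equality holds in DH(R): E_A ⋆ E_B = v^{⟨A,B⟩} Σ_C (|Ext¹_R(A,B)_C| / |Hom_R(A,B)|) · E_C, where the sum runs over isomorphism classes C and Ext¹_R(A,B)_C denotes the set of extension classes of A by B with middle term isomorphic to C. -/

import Mathlib

set_option linter.unusedSectionVars false

open CategoryTheory CategoryTheory.Limits Opposite

noncomputable section

universe u

variable (k : Type) [Field k] [Fintype k]
variable (R : Type u) [SmallCategory R] [Abelian R] [Linear k R] [EnoughProjectives R]

/-- The objects `A` of `R` such that `Hom(M, A)` is a finite set for every `M`. -/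
def IsFinHom (A : R) : Prop := ∀ M : R, Finite (M ⟶ A)

/-- The Euler form `⟨M,A⟩ = dim Hom(M,A) - dim Ext¹(M,A)`. -/
def euler (M A : R) : ℤ :=
  (Module.finrank k (M ⟶ A) : ℤ) -
    (Module.finrank k (((_root_.Ext k R 1).obj (op M)).obj A) : ℤ)

/-- The set of relations defining the Grothendieck group of `R`. -/
def sesSet : Set (FreeAbelianGroup R) :=
  {x | ∃ S : ShortComplex R, S.ShortExact ∧
    x = FreeAbelianGroup.of S.X₂ - FreeAbelianGroup.of S.X₁ - FreeAbelianGroup.of S.X₃}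

/-- The Grothendieck group `K(R)`. -/
abbrev K0 := FreeAbelianGroup R ⧸ AddSubgroup.closure (sesSet R)

/-- The class of an object in `K(R)`. -/
def K0.cls (X : R) : K0 R := QuotientAddGroup.mk (FreeAbelianGroup.of X)

/-- The set of relations defining the Grothendieck group of the subcategory `A`. -/
def sesSetA : Set (FreeAbelianGroup {A : R // IsFinHom R A}) :=
  {x | ∃ (S : ShortComplex R) (h1 : IsFinHom R S.X₁) (h2 : IsFinHom R S.X₂)
      (h3 : IsFinHom R S.X₃), S.ShortExact ∧
    x = FreeAbelianGroup.of ⟨S.X₂, h2⟩ - FreeAbelianGroup.of ⟨S.X₁, h1⟩ -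
      FreeAbelianGroup.of ⟨S.X₃, h3⟩}

/-- The Grothendieck group `K(A)`. -/
abbrev KA := FreeAbelianGroup {A : R // IsFinHom R A} ⧸ AddSubgroup.closure (sesSetA R)

/-- The class of an object of `A` in `K(A)`. -/
def KA.cls (A : {A : R // IsFinHom R A}) : KA R := QuotientAddGroup.mk (FreeAbelianGroup.of A)

/-- `R` is hereditary, i.e. of global dimension at most 1. -/
def Hereditary : Prop :=
  ∀ X Y : R, Subsingleton (((_root_.Ext k R 2).obj (op X)).obj Y)

/-- Condition (c): cancellation for projectives. -/
def CondC : Prop :=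
  ∀ P Q M : R, Projective P → Projective Q → Projective M →
    Nonempty ((M ⊞ P) ≅ (M ⊞ Q)) → Nonempty (P ≅ Q)

/-- Condition (d): every element of `K(R)` is a `ℚ`-linear combination of classes of
objects of `A`. -/
def CondD : Prop :=
  ∀ x : K0 R, ∃ n : ℕ, n ≠ 0 ∧ (n : ℤ) • x ∈
    AddSubgroup.closure (Set.range fun A : {A : R // IsFinHom R A} => K0.cls R A.1)

/-- Condition (e). -/
def CondE : Prop :=
  ∀ A B : R, IsFinHom R A → IsFinHom R B → K0.cls R A = K0.cls R B →
    ∀ P : R, Projective P → Nat.card (P ⟶ A) = Nat.card (P ⟶ B)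

structure Z2Cx where
  X0 : R
  X1 : R
  d0 : X0 ⟶ X1
  d1 : X1 ⟶ X0
  d01 : d0 ≫ d1 = 0
  d10 : d1 ≫ d0 = 0

namespace Z2Cx

variable {R}

/-- Morphisms of `ℤ/2`-graded complexes. -/
@[ext] structure Hom (M N : Z2Cx R) where
  f0 : M.X0 ⟶ N.X0
  f1 : M.X1 ⟶ N.X1
  comm0 : M.d0 ≫ f1 = f0 ≫ N.d0
  comm1 : M.d1 ≫ f0 = f1 ≫ N.d1

instance : CategoryStruct (Z2Cx R) where
  Hom := Hom
  id M := ⟨𝟙 _, 𝟙 _, by simp, by simp⟩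
  comp {M N P} f g := ⟨f.f0 ≫ g.f0, f.f1 ≫ g.f1, by
      rw [← Category.assoc, f.comm0, Category.assoc, g.comm0, Category.assoc], by
      rw [← Category.assoc, f.comm1, Category.assoc, g.comm1, Category.assoc]⟩

@[simp] lemma id_f0 (M : Z2Cx R) : (𝟙 M : Hom M M).f0 = 𝟙 M.X0 := rfl
@[simp] lemma id_f1 (M : Z2Cx R) : (𝟙 M : Hom M M).f1 = 𝟙 M.X1 := rfl
@[simp] lemma comp_f0 {M N P : Z2Cx R} (f : M ⟶ N) (g : N ⟶ P) :
    (f ≫ g).f0 = Hom.f0 f ≫ Hom.f0 g := rfl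
@[simp] lemma comp_f1 {M N P : Z2Cx R} (f : M ⟶ N) (g : N ⟶ P) :
    (f ≫ g).f1 = Hom.f1 f ≫ Hom.f1 g := rfl

instance : Category (Z2Cx R) where
  id_comp f := by apply Hom.ext <;> simp
  comp_id f := by apply Hom.ext <;> simp
  assoc f g h := by apply Hom.ext <;> simp

variable (R)

/-- The two-term complex `C_f` associated to a morphism `f`, concentrated so that
`X1 = P`, `X0 = Q`, `d1 = f`, `d0 = 0`. -/
def Cf {P Q : R} (f : P ⟶ Q) : Z2Cx R := ⟨Q, P, 0, f, by simp, by simp⟩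

/-- The shift involution `†`: it interchanges the gradings and negates the differentials. -/
def dagger (M : Z2Cx R) : Z2Cx R :=
  ⟨M.X1, M.X0, -M.d1, -M.d0, by simp [M.d10], by simp [M.d01]⟩

/-- The acyclic complex `K_P` with `d1 = 𝟙 P` and `d0 = 0`. -/
def KP (P : R) : Z2Cx R := ⟨P, P, 0, 𝟙 P, by simp, by simp⟩

/-- Direct sum of `ℤ/2`-graded complexes. -/
def dsum (M N : Z2Cx R) : Z2Cx R where
  X0 := M.X0 ⊞ N.X0
  X1 := M.X1 ⊞ N.X1
  d0 := biprod.map M.d0 N.d0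
  d1 := biprod.map M.d1 N.d1
  d01 := by ext <;> simp [M.d01, N.d01]
  d10 := by ext <;> simp [M.d10, N.d10]

/-- Degree `0` homology of a `ℤ/2`-graded complex. -/
def H0 (M : Z2Cx R) : R := (ShortComplex.mk M.d1 M.d0 M.d10).homology

/-- Degree `1` homology of a `ℤ/2`-graded complex. -/
def H1 (M : Z2Cx R) : R := (ShortComplex.mk M.d0 M.d1 M.d01).homology

/-- The homology complex `H•(M•)`, with zero differentials. -/
def Hcx (M : Z2Cx R) : Z2Cx R := ⟨H0 R M, H1 R M, 0, 0, by simp, by simp⟩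

/-- A complex is acyclic if its homology vanishes. -/
def Acyclic (M : Z2Cx R) : Prop := IsZero (H0 R M) ∧ IsZero (H1 R M)

end Z2Cx

namespace Z2Cx

variable {R}

/-- A short exact sequence of `ℤ/2`-graded complexes, exhibiting an extension of `M` by `N`
(short exactness of a sequence of complexes is componentwise short exactness). -/
structure ExtSES (M N : Z2Cx R) where
  E : Z2Cx R
  i : N ⟶ E
  p : E ⟶ M
  w0 : Hom.f0 i ≫ Hom.f0 p = 0
  w1 : Hom.f1 i ≫ Hom.f1 p = 0
  ex0 : (ShortComplex.mk (Hom.f0 i) (Hom.f0 p) w0).ShortExact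
  ex1 : (ShortComplex.mk (Hom.f1 i) (Hom.f1 p) w1).ShortExact

/-- Equivalence of extensions of complexes. -/
def ExtEquiv (M N : Z2Cx R) (s t : ExtSES M N) : Prop :=
  ∃ φ : s.E ≅ t.E, s.i ≫ φ.hom = t.i ∧ φ.hom ≫ t.p = s.p

/-- The set `Ext¹_{C(R)}(M•, N•)` of equivalence classes of extensions of `M•` by `N•`
in the category of `ℤ/2`-graded complexes over `R`. -/
def ExtCl (M N : Z2Cx R) := Quot (ExtEquiv M N)

end Z2Cx

/-- Complexes of projectives with homology in the subcategory `A`, i.e. objects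
of `C_fin(P)`. -/
def FinCx (M : Z2Cx R) : Prop :=
  Projective M.X0 ∧ Projective M.X1 ∧ IsFinHom R (Z2Cx.H0 R M) ∧ IsFinHom R (Z2Cx.H1 R M)

attribute [local instance] Classical.propDecidable

/-- The class `[M•] = [M₀] - [M₁]` in `K(R)` of a `ℤ/2`-graded complex. -/
def clsOf (M : Z2Cx R) : K0 R := K0.cls R M.X0 - K0.cls R M.X1

/-- Isomorphism of `ℤ/2`-graded complexes, as a relation. -/
def cxRel (M N : Z2Cx R) : Prop := Nonempty (M ≅ N)

/-- Isomorphism classes of `ℤ/2`-graded complexes. -/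
def CxCls := Quot (cxRel R)

/-- The isomorphism class of a complex. -/
def ccls (M : Z2Cx R) : CxCls R := Quot.mk _ M

/-- The isomorphism class of the middle term of an extension class. -/
def extMid {M N : Z2Cx R} : Z2Cx.ExtCl M N → CxCls R :=
  Quot.lift (fun s => ccls R s.E) (fun s t h => by
    obtain ⟨φ, -, -⟩ := h
    exact Quot.sound ⟨φ⟩)

/-- `|Ext¹_{C(R)}(M•,N•)_{P•}|` : the number of extension classes of `M•` by `N•` whose
middle term has isomorphism class `c`. -/
def extCount (M N : Z2Cx R) (c : CxCls R) : ℕ :=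
  Nat.card {x : Z2Cx.ExtCl M N // extMid R x = c}

/-- The `ℚ`-valued extension of the Euler form to `K(R) × K(R)`
(which exists by condition (d)). -/
structure EulerData where
  eQ : K0 R →+ K0 R →+ ℚ
  compat : ∀ (M A : R), IsFinHom R A →
    eQ (K0.cls R M) (K0.cls R A) = euler k R M A

/-- A choice, for every complex of projectives `M•`, of the classes `[M₁⁺]` and `[M₀⁻]`
of the components of the canonical decomposition `M• = M•⁺ ⊕ M•⁻ = C_f ⊕ C_g^†`. -/
structure DecData where
  cplus : Z2Cx R → K0 R
  cminus : Z2Cx R → K0 R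
  spec : ∀ M : Z2Cx R, Projective M.X0 → Projective M.X1 →
    ∃ (P Q P' Q' : R) (f : P ⟶ Q) (g : P' ⟶ Q'),
      Projective P ∧ Projective Q ∧ Projective P' ∧ Projective Q' ∧
      Mono f ∧ Mono g ∧
      Nonempty (M ≅ Z2Cx.dsum R (Z2Cx.Cf R f) (Z2Cx.dagger R (Z2Cx.Cf R g))) ∧
      cplus M = K0.cls R P ∧ cminus M = K0.cls R P'

variable {k R}

/-- `μ(M•,N•) = Σ_{i,j} ⟨[Mᵢ^{ε(j)}], [N_{j+1}^{ε(i)}]⟩`. -/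
def mu (ed : EulerData k R) (dd : DecData R) (M N : Z2Cx R) : ℚ :=
  ed.eQ (K0.cls R M.X0 - dd.cminus M) (dd.cplus N) +
    ed.eQ (dd.cplus M) (K0.cls R N.X1 - dd.cplus N) +
    ed.eQ (dd.cminus M) (K0.cls R N.X0 - dd.cminus N) +
    ed.eQ (K0.cls R M.X1 - dd.cplus M) (dd.cminus N)

/-- `h(M•,N•) = q^{μ(M•,N•)} ⬝ |Hom_{C(R)}(H•(M•), H•(N•))|`. -/
def hVal (ed : EulerData k R) (dd : DecData R) (M N : Z2Cx R) : ℝ :=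
  (Fintype.card k : ℝ) ^ ((mu ed dd M N : ℚ) : ℝ) *
    (Nat.card (Z2Cx.Hcx R M ⟶ Z2Cx.Hcx R N) : ℝ)

/-- The structure constants of the Hall algebra `H(C_fin(P))`:
the coefficient of the basis element `c` in `[M•] ⋆ [N•]`. -/
def hallCoeff (v : ℝ) (ed : EulerData k R) (dd : DecData R) (M N : Z2Cx R)
    (c : CxCls R) : ℂ :=
  (((v ^ (((ed.eQ (K0.cls R M.X0) (K0.cls R N.X0) +
      ed.eQ (K0.cls R M.X1) (K0.cls R N.X1) : ℚ)) : ℝ) *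
    (extCount R M N c : ℝ) / hVal ed dd M N : ℝ)) : ℂ)

variable (k R)

/-- Objects of `C_fin(P)`. -/
def FCx := {M : Z2Cx R // FinCx R M}

/-- Isomorphism classes of objects of `C_fin(P)`. -/
def FCls := Quot (fun M N : FCx R => Nonempty (M.1 ≅ N.1))

/-- The isomorphism class of an object of `C_fin(P)`. -/
def fcls (M : FCx R) : FCls R := Quot.mk _ M

/-- Comparison of isomorphism classes in `C_fin(P)` with isomorphism classes of
arbitrary complexes. -/
def fc2c : FCls R → CxCls R :=
  Quot.lift (fun M => ccls R M.1) (fun _ _ h => Quot.sound h)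

/-- The symmetrized Euler form `(α,β) = ⟨α,β⟩ + ⟨β,α⟩`. -/
def sForm (ed : EulerData k R) (a b : K0 R) : ℚ := ed.eQ a b + ed.eQ b a

open ZeroObject in
/-- The zero complex. -/
def zeroCx : Z2Cx R := ⟨0, 0, 0, 0, by simp, by simp⟩

/-- All the data constituting the localized Hall algebra `DH(R)`:
the Hall algebra `H(C_fin(P))` (a free `ℂ`-module on the isomorphism classes of
`C_fin(P)`, with the Hall multiplication `mulH` determined by the structure constants
`hallCoeff`), and its localization `D` at the classes of acyclic complexes, together
with the elements `K_α ⋆ K_β^† = KK (α, β)` and the canonical map `loc`.  The axioms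
express that `D` is precisely the localization of `H(C_fin(P))` at the classes of
acyclic complexes, with the `ℂ[K(R) × K(R)]`-bimodule structure of the paper. -/
structure DHSetting where
  v : ℝ
  v_pos : 0 < v
  v_sq : v ^ 2 = (Fintype.card k : ℝ)
  ed : EulerData k R
  dd : DecData R
  /-- the Hall multiplication on `H(C_fin(P))` -/
  mulH : ((FCls R) →₀ ℂ) →ₗ[ℂ] ((FCls R) →₀ ℂ) →ₗ[ℂ] ((FCls R) →₀ ℂ)
  mulH_single : ∀ (M N : FCx R) (c : FCls R),
    (mulH (Finsupp.single (fcls R M) 1) (Finsupp.single (fcls R N) 1)) c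
      = hallCoeff v ed dd M.1 N.1 (fc2c R c)
  /-- the carrier of the localized Hall algebra `DH(R)` -/
  D : Type u
  [grp : AddCommGroup D]
  [mod : Module ℂ D]
  /-- the multiplication `⋆` of `DH(R)` -/
  mulD : D →ₗ[ℂ] D →ₗ[ℂ] D
  one : D
  one_mul : ∀ d, mulD one d = d
  mul_one : ∀ d, mulD d one = d
  /-- the canonical map `H(C_fin(P)) → DH(R)` -/
  loc : ((FCls R) →₀ ℂ) →ₗ[ℂ] D
  loc_one : ∀ h : FinCx R (zeroCx R),
    loc (Finsupp.single (fcls R ⟨zeroCx R, h⟩) 1) = one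
  loc_mul : ∀ x y, mulD (loc x) (loc y) = loc (mulH x y)
  /-- the elements `K_α ⋆ K_β^†` -/
  KK : K0 R × K0 R → D
  KK_zero : KK 0 = one
  KK_mul : ∀ a b, mulD (KK a) (KK b) = KK (a + b)
  KK_P : ∀ (P : R), Projective P → ∀ h : FinCx R (Z2Cx.KP R P),
    loc (Finsupp.single (fcls R ⟨Z2Cx.KP R P, h⟩) 1) = KK (K0.cls R P, 0)
  KK_Pd : ∀ (P : R), Projective P → ∀ h : FinCx R (Z2Cx.dagger R (Z2Cx.KP R P)),
    loc (Finsupp.single (fcls R ⟨Z2Cx.dagger R (Z2Cx.KP R P), h⟩) 1) = KK (0, K0.cls R P)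
  /-- the bimodule rule `(K_α ⋆ K_β^†) ⋆ [M•] = v^{(α-β,[M•])} [M•] ⋆ (K_α ⋆ K_β^†)` -/
  comm_rule : ∀ (a b : K0 R) (M : FCx R),
    mulD (KK (a, b)) (loc (Finsupp.single (fcls R M) 1)) =
      (((v ^ ((sForm k R ed (a - b) (clsOf R M.1) : ℚ) : ℝ) : ℝ) : ℂ)) •
        mulD (loc (Finsupp.single (fcls R M) 1)) (KK (a, b))
  /-- multiplication of elements in standard form is induced by the Hall multiplication -/
  mul_general : ∀ (x : (FCls R) →₀ ℂ) (M : FCx R) (a b a' b' : K0 R),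
    mulD (mulD (loc x) (KK (a, b))) (mulD (loc (Finsupp.single (fcls R M) 1)) (KK (a', b'))) =
      (((v ^ ((sForm k R ed (a - b) (clsOf R M.1) : ℚ) : ℝ) : ℝ) : ℂ)) •
        mulD (loc (mulH x (Finsupp.single (fcls R M) 1))) (KK (a + a', b + b'))
  /-- every element of the localization has the standard form `x ⋆ K_α ⋆ K_β^†` -/
  span : ∀ d : D, ∃ (x : (FCls R) →₀ ℂ) (a b : K0 R), d = mulD (loc x) (KK (a, b))
  /-- the kernel of the localization map is exactly the torsion with respect to the
  classes of acyclic complexes -/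
  loc_ker : ∀ x, loc x = 0 ↔ ∃ (K : Z2Cx R) (h : FinCx R K),
    Z2Cx.Acyclic R K ∧ mulH x (Finsupp.single (fcls R ⟨K, h⟩) 1) = 0

attribute [instance] DHSetting.grp DHSetting.mod

variable {k R}

/-- The element `E_{M•} = v^{⟨[M₁⁺]-[M₀⁻],[M•]⟩} K_{-[M₁⁺]} ⋆ K^†_{-[M₀⁻]} ⋆ [M•]`
of the localized Hall algebra. -/
def Eelt (S : DHSetting k R) (M : Z2Cx R) (h : FinCx R M) : S.D :=
  (((S.v ^ ((S.ed.eQ (S.dd.cplus M - S.dd.cminus M) (clsOf R M) : ℚ) : ℝ) : ℝ) : ℂ)) •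
    S.mulD (S.KK (-(S.dd.cplus M), -(S.dd.cminus M)))
      (S.loc (Finsupp.single (fcls R ⟨M, h⟩) 1))

variable (R)

/-- A short exact sequence in `R` exhibiting an extension of `A` by `B`. -/
structure RExt (A B : R) where
  E : R
  i : B ⟶ E
  p : E ⟶ A
  w : i ≫ p = 0
  ex : (ShortComplex.mk i p w).ShortExact

/-- Equivalence of extensions in `R`. -/
def RExtEq (A B : R) (s t : RExt R A B) : Prop :=
  ∃ φ : s.E ≅ t.E, s.i ≫ φ.hom = t.i ∧ φ.hom ≫ t.p = s.p

/-- The set `Ext¹_R(A,B)` of equivalence classes of extensions of `A` by `B`. -/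
def RExtCl (A B : R) := Quot (RExtEq R A B)

/-- Isomorphism classes of objects of `R`. -/
def RCls := Quot (fun X Y : R => Nonempty (X ≅ Y))

/-- The isomorphism class of an object of `R`. -/
def rcls (X : R) : RCls R := Quot.mk _ X

/-- The isomorphism class of the middle term of an extension class. -/
def rExtMid {A B : R} : RExtCl R A B → RCls R :=
  Quot.lift (fun s => rcls R s.E) (fun _ _ h => by
    obtain ⟨φ, -, -⟩ := h
    exact Quot.sound ⟨φ⟩)

/-- `|Ext¹_R(A,B)_C|`: the number of extension classes of `A` by `B` with middle term of
isomorphism class `c`. -/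
def rExtCount (A B : R) (c : RCls R) : ℕ :=
  Nat.card {x : RExtCl R A B // rExtMid R x = c}

variable {R}

/-! ### Auxiliary homological algebra -/

lemma ses_lift {X Y Z : R} {i : X ⟶ Y} {p : Y ⟶ Z} {w : i ≫ p = 0}
    (h : (ShortComplex.mk i p w).ShortExact) {T : R} (x : T ⟶ Y) (hx : x ≫ p = 0) :
    ∃ y : T ⟶ X, y ≫ i = x := by
  have := h.mono_f
  exact ⟨h.exact.lift x hx, h.exact.lift_f x hx⟩

lemma ses_desc {X Y Z : R} {i : X ⟶ Y} {p : Y ⟶ Z} {w : i ≫ p = 0}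
    (h : (ShortComplex.mk i p w).ShortExact) {T : R} (x : Y ⟶ T) (hx : i ≫ x = 0) :
    ∃ y : Z ⟶ T, p ≫ y = x := by
  have := h.epi_g
  exact ⟨h.exact.desc x hx, h.exact.g_desc x hx⟩

lemma ses_mk {X Y Z : R} {i : X ⟶ Y} {p : Y ⟶ Z} {w : i ≫ p = 0} (hi : Mono i) (hp : Epi p)
    (h : ∀ (T : R) (x : T ⟶ Y), x ≫ p = 0 → ∃ (T' : R) (e : T' ⟶ T) (_ : Epi e) (y : T' ⟶ X),
      e ≫ x = y ≫ i) : (ShortComplex.mk i p w).ShortExact where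
  exact := by
    rw [ShortComplex.exact_iff_exact_up_to_refinements]
    intro T x hx
    exact h T x hx
  mono_f := hi
  epi_g := hp

lemma nineA {P P' Q Q' A B E1 E0 C : R} {f : P ⟶ Q} {g : P' ⟶ Q'} {a : Q ⟶ A} {b : Q' ⟶ B}
    {wf : f ≫ a = 0} {wg : g ≫ b = 0}
    (hf : (ShortComplex.mk f a wf).ShortExact) (hg : (ShortComplex.mk g b wg).ShortExact)
    {i1 : P' ⟶ E1} {p1 : E1 ⟶ P} {i0 : Q' ⟶ E0} {p0 : E0 ⟶ Q}
    {w1 : i1 ≫ p1 = 0} {w0 : i0 ≫ p0 = 0}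
    (h1 : (ShortComplex.mk i1 p1 w1).ShortExact) (h0 : (ShortComplex.mk i0 p0 w0).ShortExact)
    {d : E1 ⟶ E0} (ci : i1 ≫ d = g ≫ i0) (cp : d ≫ p0 = p1 ≫ f)
    {i : B ⟶ C} {p : C ⟶ A} {w : i ≫ p = 0} (ht : (ShortComplex.mk i p w).ShortExact)
    {r : E0 ⟶ C} (hi : i0 ≫ r = b ≫ i) (hp : r ≫ p = p0 ≫ a) (hd : d ≫ r = 0) :
    (ShortComplex.mk d r hd).ShortExact := by
  have mf : Mono f := hf.mono_f
  have mg : Mono g := hg.mono_f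
  have ea : Epi a := hf.epi_g
  have eb : Epi b := hg.epi_g
  have mi1 : Mono i1 := h1.mono_f
  have ep1 : Epi p1 := h1.epi_g
  have mi0 : Mono i0 := h0.mono_f
  have ep0 : Epi p0 := h0.epi_g
  have mi : Mono i := ht.mono_f
  have ep : Epi p := ht.epi_g
  refine ses_mk ?_ ?_ ?_
  · refine Preadditive.mono_of_cancel_zero _ fun {T} x hx => ?_
    have h : x ≫ p1 = 0 := by
      rw [← cancel_mono f, Category.assoc, ← cp, reassoc_of% hx]; simp
    obtain ⟨y, rfl⟩ := ses_lift h1 x h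
    have : y = 0 := by
      rw [← cancel_mono g, ← cancel_mono i0, Category.assoc, ← ci, ← Category.assoc, hx]; simp
    simp [this]
  · refine Preadditive.epi_of_cancel_zero _ fun {T} x hx => ?_
    have h : i ≫ x = 0 := by
      rw [← cancel_epi b, ← reassoc_of% hi, hx]; simp
    obtain ⟨y, rfl⟩ := ses_desc ht x h
    have : y = 0 := by
      rw [← cancel_epi a, ← cancel_epi p0, ← reassoc_of% hp, hx]; simp
    simp [this]
  · intro T x hx
    obtain ⟨y, hy⟩ := ses_lift hf (x ≫ p0) (by rw [Category.assoc, ← hp, reassoc_of% hx]; simp)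
    obtain ⟨T', e, he, z, hz⟩ := surjective_up_to_refinements_of_epi p1 y
    obtain ⟨u, hu⟩ := ses_lift h0 (e ≫ x - z ≫ d) (by
      rw [Preadditive.sub_comp, Category.assoc, Category.assoc, cp, ← hy, ← reassoc_of% hz, sub_self])
    have h2 : u ≫ b = 0 := by
      rw [← cancel_mono i, Category.assoc, ← hi, reassoc_of% hu, Preadditive.sub_comp,
        Category.assoc, Category.assoc, hx, hd]; simp
    obtain ⟨u', hu'⟩ := ses_lift hg u h2
    refine ⟨T', e, he, z + u' ≫ i1, ?_⟩
    rw [Preadditive.add_comp, Category.assoc, ci, reassoc_of% hu', hu]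
    abel

lemma nineB {P P' Q Q' A B E1 E0 : R} {f : P ⟶ Q} {g : P' ⟶ Q'} {a : Q ⟶ A} {b : Q' ⟶ B}
    {wf : f ≫ a = 0} {wg : g ≫ b = 0}
    (hf : (ShortComplex.mk f a wf).ShortExact) (hg : (ShortComplex.mk g b wg).ShortExact)
    {i1 : P' ⟶ E1} {p1 : E1 ⟶ P} {i0 : Q' ⟶ E0} {p0 : E0 ⟶ Q}
    {w1 : i1 ≫ p1 = 0} {w0 : i0 ≫ p0 = 0}
    (h1 : (ShortComplex.mk i1 p1 w1).ShortExact) (h0 : (ShortComplex.mk i0 p0 w0).ShortExact)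
    {d : E1 ⟶ E0} (ci : i1 ≫ d = g ≫ i0) (cp : d ≫ p0 = p1 ≫ f) :
    ∃ (t : RExt R A B) (r : E0 ⟶ t.E), i0 ≫ r = b ≫ t.i ∧ r ≫ t.p = p0 ≫ a ∧ d ≫ r = 0 := by
  have mf : Mono f := hf.mono_f
  have mg : Mono g := hg.mono_f
  have ea : Epi a := hf.epi_g
  have eb : Epi b := hg.epi_g
  have mi1 : Mono i1 := h1.mono_f
  have ep1 : Epi p1 := h1.epi_g
  have mi0 : Mono i0 := h0.mono_f
  have ep0 : Epi p0 := h0.epi_g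
  have hr : d ≫ cokernel.π d = 0 := cokernel.condition d
  have er : Epi (cokernel.π d) := inferInstance
  have hker : ∀ {T : R} (x : T ⟶ E0), x ≫ cokernel.π d = 0 →
      ∃ (T' : R) (e : T' ⟶ T) (_ : Epi e) (y : T' ⟶ E1), e ≫ x = y ≫ d := by
    intro T x hx
    have := ShortComplex.exact_cokernel d
    rw [ShortComplex.exact_iff_exact_up_to_refinements] at this
    exact this x hx
  obtain ⟨i, hi⟩ := ses_desc hg (i0 ≫ cokernel.π d) (by rw [← reassoc_of% ci, hr]; simp)
  have hdp : d ≫ p0 ≫ a = 0 := by rw [reassoc_of% cp, wf]; simp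
  have hp : cokernel.π d ≫ cokernel.desc d (p0 ≫ a) hdp = p0 ≫ a := cokernel.π_desc _ _ _
  generalize cokernel.desc d (p0 ≫ a) hdp = p at hp
  generalize cokernel.π d = r at *
  have w : i ≫ p = 0 := by
    rw [← cancel_epi b, reassoc_of% hi, hp, reassoc_of% w0]; simp
  have hs : (ShortComplex.mk i p w).ShortExact := by
    refine ses_mk ?_ ?_ ?_
    · refine Preadditive.mono_of_cancel_zero _ fun {T} x hx => ?_
      obtain ⟨T', e, he, y, hy⟩ := surjective_up_to_refinements_of_epi b x
      obtain ⟨T'', e', he', z, hz⟩ := hker (y ≫ i0) (by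
        rw [Category.assoc, ← hi, ← reassoc_of% hy, hx]; simp)
      have hz1 : z ≫ p1 = 0 := by
        rw [← cancel_mono f, Category.assoc, ← cp, ← reassoc_of% hz, w0]; simp
      obtain ⟨z', rfl⟩ := ses_lift h1 z hz1
      have h3 : e' ≫ y = z' ≫ g := by
        rw [← cancel_mono i0, Category.assoc, hz, Category.assoc, Category.assoc, ci]
      rw [← cancel_epi e, ← cancel_epi e', hy, reassoc_of% h3, wg]; simp
    · have : Epi (r ≫ p) := by rw [hp]; exact epi_comp _ _
      exact epi_of_epi r p
    · intro T x hx
      obtain ⟨T', e, he, y, hy⟩ := surjective_up_to_refinements_of_epi r x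
      obtain ⟨z, hz⟩ := ses_lift hf (y ≫ p0) (by
        rw [Category.assoc, ← hp, ← reassoc_of% hy, hx]; simp)
      obtain ⟨T'', e', he', y', hy'⟩ := surjective_up_to_refinements_of_epi p1 z
      obtain ⟨u, hu⟩ := ses_lift h0 (e' ≫ y - y' ≫ d) (by
        rw [Preadditive.sub_comp, Category.assoc, Category.assoc, cp, ← hz, reassoc_of% hy',
          sub_self])
      refine ⟨T'', e' ≫ e, epi_comp _ _, u ≫ b, ?_⟩
      rw [Category.assoc, Category.assoc, hi, reassoc_of% hu, hy, Preadditive.sub_comp,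
        Category.assoc, Category.assoc, hr]
      simp
  exact ⟨⟨_, i, p, w, hs⟩, r, hi.symm, hp, hr⟩

lemma rext_iso {A B : R} (s t : RExt R A B) (h : s.E ⟶ t.E) (h1 : s.i ≫ h = t.i)
    (h2 : h ≫ t.p = s.p) : RExtEq R A B s t := by
  let φ : ShortComplex.mk s.i s.p s.w ⟶ ShortComplex.mk t.i t.p t.w :=
    { τ₁ := 𝟙 _, τ₂ := h, τ₃ := 𝟙 _, comm₁₂ := by simp [h1], comm₂₃ := by simp [h2] }
  have a1 : IsIso φ.τ₁ := by dsimp [φ]; infer_instance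
  have a3 : IsIso φ.τ₃ := by dsimp [φ]; infer_instance
  have := ShortComplex.isIso₂_of_shortExact_of_isIso₁₃ φ s.ex t.ex
  have : IsIso h := this
  exact ⟨asIso h, h1, h2⟩

lemma mid_iso {X Y Z Z' : R} {i : X ⟶ Y} {p : Y ⟶ Z} {w : i ≫ p = 0} {i' : X ⟶ Z'} {p' : Z' ⟶ Z}
    {w' : i' ≫ p' = 0} (h : (ShortComplex.mk i p w).ShortExact)
    (h' : (ShortComplex.mk i' p' w').ShortExact) (m : Y ⟶ Z') (h1 : i ≫ m = i') (h2 : m ≫ p' = p) :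
    IsIso m := by
  obtain ⟨φ, hφ, -⟩ := rext_iso (R := R) ⟨_, i, p, w, h⟩ ⟨_, i', p', w', h'⟩ m h1 h2
  let φ : ShortComplex.mk i p w ⟶ ShortComplex.mk i' p' w' :=
    { τ₁ := 𝟙 _, τ₂ := m, τ₃ := 𝟙 _, comm₁₂ := by simp [h1], comm₂₃ := by simp [h2] }
  have a1 : IsIso φ.τ₁ := by dsimp [φ]; infer_instance
  have a3 : IsIso φ.τ₃ := by dsimp [φ]; infer_instance
  exact ShortComplex.isIso₂_of_shortExact_of_isIso₁₃ φ h h'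

open Z2Cx

/-- Componentwise isomorphisms of complexes are isomorphisms. -/
def cxIso {M N : Z2Cx R} (e0 : M.X0 ≅ N.X0) (e1 : M.X1 ≅ N.X1)
    (c0 : M.d0 ≫ e1.hom = e0.hom ≫ N.d0) (c1 : M.d1 ≫ e0.hom = e1.hom ≫ N.d1) : M ≅ N where
  hom := (⟨e0.hom, e1.hom, c0, c1⟩ : Z2Cx.Hom M N)
  inv := (⟨e0.inv, e1.inv, by rw [Iso.eq_inv_comp, ← reassoc_of% c0]; simp,
    by rw [Iso.eq_inv_comp, ← reassoc_of% c1]; simp⟩ : Z2Cx.Hom N M)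
  hom_inv_id := by apply Z2Cx.Hom.ext <;> simp
  inv_hom_id := by apply Z2Cx.Hom.ext <;> simp

def isoX0 {M N : Z2Cx R} (e : M ≅ N) : M.X0 ≅ N.X0 where
  hom := Hom.f0 e.hom
  inv := Hom.f0 e.inv
  hom_inv_id := by rw [← comp_f0, e.hom_inv_id]; rfl
  inv_hom_id := by rw [← comp_f0, e.inv_hom_id]; rfl

def isoX1 {M N : Z2Cx R} (e : M ≅ N) : M.X1 ≅ N.X1 where
  hom := Hom.f1 e.hom
  inv := Hom.f1 e.inv
  hom_inv_id := by rw [← comp_f1, e.hom_inv_id]; rfl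
  inv_hom_id := by rw [← comp_f1, e.inv_hom_id]; rfl

/-- `f` and `a` form a projective resolution. -/
structure IsRes {P Q A : R} (f : P ⟶ Q) (a : Q ⟶ A) : Prop where
  pP : Projective P
  pQ : Projective Q
  w : f ≫ a = 0
  ex : (ShortComplex.mk f a w).ShortExact

section
variable {P P' Q Q' : R} {f : P ⟶ Q} {g : P' ⟶ Q'}

def si0 (s : ExtSES (Cf R f) (Cf R g)) : Q' ⟶ s.E.X0 := Hom.f0 s.i
def si1 (s : ExtSES (Cf R f) (Cf R g)) : P' ⟶ s.E.X1 := Hom.f1 s.i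
def sp0 (s : ExtSES (Cf R f) (Cf R g)) : s.E.X0 ⟶ Q := Hom.f0 s.p
def sp1 (s : ExtSES (Cf R f) (Cf R g)) : s.E.X1 ⟶ P := Hom.f1 s.p
end

/-- Compatibility of an extension of complexes with an extension of objects. -/
structure ExRel {P P' Q Q' A B : R} {f : P ⟶ Q} {g : P' ⟶ Q'} (a : Q ⟶ A) (b : Q' ⟶ B)
    (s : ExtSES (Cf R f) (Cf R g)) (t : RExt R A B) (r : s.E.X0 ⟶ t.E) : Prop where
  hi : si0 s ≫ r = b ≫ t.i
  hp : r ≫ t.p = sp0 s ≫ a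
  hd : s.E.d1 ≫ r = 0

section
variable {P P' Q Q' A B : R} {f : P ⟶ Q} {g : P' ⟶ Q'} {a : Q ⟶ A} {b : Q' ⟶ B}

lemma s_ci (s : ExtSES (Cf R f) (Cf R g)) :
    si1 s ≫ s.E.d1 = g ≫ si0 s :=
  (Hom.comm1 s.i).symm

lemma s_cp (s : ExtSES (Cf R f) (Cf R g)) :
    s.E.d1 ≫ sp0 s = sp1 s ≫ f :=
  Hom.comm1 s.p

lemma ExRel.ses (hf : IsRes f a) (hg : IsRes g b) {s : ExtSES (Cf R f) (Cf R g)}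
    {t : RExt R A B} {r : s.E.X0 ⟶ t.E} (h : ExRel a b s t r) :
    (ShortComplex.mk s.E.d1 r h.hd).ShortExact :=
  nineA hf.ex hg.ex s.ex1 s.ex0 (s_ci s) (s_cp s) t.ex h.hi h.hp h.hd

lemma exRel_exists (hf : IsRes f a) (hg : IsRes g b) (s : ExtSES (Cf R f) (Cf R g)) :
    ∃ (t : RExt R A B) (r : s.E.X0 ⟶ t.E), ExRel a b s t r := by
  obtain ⟨t, r, h1, h2, h3⟩ := nineB hf.ex hg.ex s.ex1 s.ex0 (s_ci s) (s_cp s)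
  exact ⟨t, r, h1, h2, h3⟩

lemma ses_projective {X Y Z : R} {i : X ⟶ Y} {p : Y ⟶ Z} {w : i ≫ p = 0}
    (h : (ShortComplex.mk i p w).ShortExact) (hX : Projective X) (hZ : Projective Z) :
    Projective Y := by
  have : Epi p := h.epi_g
  have s := h.splittingOfProjective
  exact Projective.of_iso s.isoBinaryBiproduct.symm (inferInstanceAs (Projective (X ⊞ Z)))

lemma ExRel.isRes (hf : IsRes f a) (hg : IsRes g b) {s : ExtSES (Cf R f) (Cf R g)}
    {t : RExt R A B} {r : s.E.X0 ⟶ t.E} (h : ExRel a b s t r) : IsRes s.E.d1 r :=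
  ⟨ses_projective s.ex1 hg.pP hf.pP, ses_projective s.ex0 hg.pQ hf.pQ, h.hd, h.ses hf hg⟩

lemma d0_zero {M : Z2Cx R} {C : R} {r : M.X0 ⟶ C} (h : IsRes M.d1 r) : M.d0 = 0 := by
  have : Mono M.d1 := h.ex.mono_f
  rw [← cancel_mono M.d1, M.d01, zero_comp]

lemma exRel_fwd (hf : IsRes f a) (hg : IsRes g b) {s s' : ExtSES (Cf R f) (Cf R g)}
    {t t' : RExt R A B} {r : s.E.X0 ⟶ t.E} {r' : s'.E.X0 ⟶ t'.E} (h : ExRel a b s t r)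
    (h' : ExRel a b s' t' r') (e : ExtEquiv _ _ s s') : RExtEq R A B t t' := by
  obtain ⟨φ, h1, h2⟩ := e
  have h10 : si0 s ≫ Hom.f0 φ.hom =
    si0 s' := congrArg Hom.f0 h1
  have h20 : Hom.f0 φ.hom ≫ sp0 s' =
    sp0 s := congrArg Hom.f0 h2
  have ss := h.ses hf hg
  obtain ⟨m, hm⟩ := ses_desc ss (Hom.f0 φ.hom ≫ r') (by
    rw [reassoc_of% (Hom.comm1 φ.hom : s.E.d1 ≫ Hom.f0 φ.hom = Hom.f1 φ.hom ≫ s'.E.d1), h'.hd, comp_zero])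
  have : Epi b := hg.ex.epi_g
  have : Epi r := ss.epi_g
  refine rext_iso _ _ m ?_ ?_
  · rw [← cancel_epi b, ← reassoc_of% h.hi, hm, reassoc_of% h10, h'.hi]
  · rw [← cancel_epi r, reassoc_of% hm, h'.hp, reassoc_of% h20, h.hp]

lemma exRel_bwd (hf : IsRes f a) (hg : IsRes g b) {s s' : ExtSES (Cf R f) (Cf R g)}
    {t t' : RExt R A B} {r : s.E.X0 ⟶ t.E} {r' : s'.E.X0 ⟶ t'.E} (h : ExRel a b s t r)
    (h' : ExRel a b s' t' r') (e : RExtEq R A B t t') : ExtEquiv _ _ s s' := by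
  obtain ⟨ψ, k1, k2⟩ := e
  have pQ := hf.pQ
  have : Mono f := hf.ex.mono_f
  have : Epi b := hg.ex.epi_g
  have ss' := h'.ses hf hg
  have : Mono s'.E.d1 := ss'.mono_f
  have hz := d0_zero (h.isRes hf hg)
  have hz' := d0_zero (h'.isRes hf hg)
  have ci := s_ci s
  have ci' := s_ci s'
  have cp := s_cp s
  have cp' := s_cp s'
  have ex0 := s.ex0
  have ex0' := s'.ex0
  have ex1 := s.ex1
  have ex1' := s'.ex1
  have hi := h.hi
  have hi' := h'.hi
  have hp := h.hp
  have hp' := h'.hp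
  have w0 : si0 s ≫ sp0 s = 0 := s.w0
  have w0' : si0 s' ≫ sp0 s' = 0 := s'.w0
  change (ShortComplex.mk (si0 s)
    (sp0 s) w0).ShortExact at ex0
  change (ShortComplex.mk (si0 s')
    (sp0 s') w0').ShortExact at ex0'
  obtain ⟨φ0, q1, q2, q3⟩ : ∃ φ0 : s.E.X0 ⟶ s'.E.X0,
      si0 s ≫ φ0 = si0 s' ∧
      φ0 ≫ sp0 s' = sp0 s ∧
      φ0 ≫ r' = r ≫ ψ.hom := by
    generalize si0 s = i0 at *
    generalize si0 s' = i0' at *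
    generalize sp0 s = p0 at *
    generalize sp0 s' = p0' at *
    have : Epi p0 := ex0.epi_g
    have : Epi p0' := ex0'.epi_g
    have pQ1 : Projective (ShortComplex.mk i0 p0 w0).X₃ := pQ
    have sp := ex0.splittingOfProjective
    have rr : i0 ≫ sp.r = 𝟙 _ := sp.f_r
    let σ' : Q ⟶ s'.E.X0 := Projective.factorThru (𝟙 Q) p0'
    have hσ' : σ' ≫ p0' = 𝟙 Q := Projective.factorThru_comp _ _
    let φ' : s.E.X0 ⟶ s'.E.X0 := sp.r ≫ i0' + p0 ≫ σ'
    have e1 : i0 ≫ φ' = i0' := by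
      simp only [φ', Preadditive.comp_add, reassoc_of% rr, reassoc_of% w0, zero_comp, add_zero]
    have e2 : φ' ≫ p0' = p0 := by
      simp only [φ', Preadditive.add_comp, Category.assoc, w0', hσ', comp_zero, Category.comp_id,
        zero_add]
    obtain ⟨x, hx⟩ := ses_desc ex0 (r ≫ ψ.hom - φ' ≫ r') (by
      rw [Preadditive.comp_sub, reassoc_of% hi, k1, reassoc_of% e1, hi', sub_self])
    obtain ⟨c, hc⟩ := ses_lift t'.ex x (by
      rw [← cancel_epi p0, reassoc_of% hx, Preadditive.sub_comp, Category.assoc, Category.assoc,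
        k2, hp, hp', reassoc_of% e2, sub_self, comp_zero])
    let l : Q ⟶ Q' := Projective.factorThru c b
    have hl : l ≫ b = c := Projective.factorThru_comp _ _
    refine ⟨φ' + p0 ≫ l ≫ i0', ?_, ?_, ?_⟩
    · rw [Preadditive.comp_add, e1, reassoc_of% w0, zero_comp, add_zero]
    · rw [Preadditive.add_comp, e2, Category.assoc, Category.assoc, w0', comp_zero, comp_zero,
        add_zero]
    · rw [Preadditive.add_comp, Category.assoc, Category.assoc, hi', reassoc_of% hl, hc, hx]
      abel
  obtain ⟨φ1, hφ1⟩ := ses_lift ss' (s.E.d1 ≫ φ0) (by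
    rw [Category.assoc, q3, reassoc_of% h.hd, zero_comp])
  have m1 : si1 s ≫ φ1 = si1 s' := by
    rw [← cancel_mono s'.E.d1, Category.assoc, hφ1, reassoc_of% ci, q1, ci']
  have m2 : φ1 ≫ sp1 s' = sp1 s := by
    rw [← cancel_mono f, Category.assoc, ← cp', reassoc_of% hφ1, q2, cp]
  have i0 : IsIso φ0 := mid_iso ex0 ex0' φ0 q1 q2
  have i1 : IsIso φ1 := mid_iso ex1 ex1' φ1 m1 m2
  refine ⟨cxIso (asIso φ0) (asIso φ1) (by rw [hz, hz']; simp) (by simp [hφ1]), ?_, ?_⟩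
  · apply Hom.ext
    · exact q1
    · exact m1
  · apply Hom.ext
    · exact q2
    · exact m2

/-- The extension of complexes determined by `u : P ⟶ Q'`. -/
def Eu (f : P ⟶ Q) (g : P' ⟶ Q') (u : P ⟶ Q') : ExtSES (Cf R f) (Cf R g) where
  E := ⟨Q ⊞ Q', P ⊞ P', 0, biprod.desc (biprod.lift f (-u)) (biprod.lift 0 g), by simp, by simp⟩
  i := (⟨(biprod.inr : Q' ⟶ Q ⊞ Q'), (biprod.inr : P' ⟶ P ⊞ P'), by simp [Cf],
    by simp only [Cf]; ext <;> simp⟩ : Z2Cx.Hom _ _)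
  p := (⟨(biprod.fst : Q ⊞ Q' ⟶ Q), (biprod.fst : P ⊞ P' ⟶ P), by simp [Cf],
    by simp only [Cf]; ext <;> simp⟩ : Z2Cx.Hom _ _)
  w0 := (biprod.inr_fst : (biprod.inr : Q' ⟶ Q ⊞ Q') ≫ biprod.fst = 0)
  w1 := (biprod.inr_fst : (biprod.inr : P' ⟶ P ⊞ P') ≫ biprod.fst = 0)
  ex0 := (ShortComplex.Splitting.mk (S := ShortComplex.mk (biprod.inr : Q' ⟶ Q ⊞ Q')
    (biprod.fst : Q ⊞ Q' ⟶ Q) (by simp)) biprod.snd biprod.inl (by simp) (by simp)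
      (by ext <;> simp)).shortExact
  ex1 := (ShortComplex.Splitting.mk (S := ShortComplex.mk (biprod.inr : P' ⟶ P ⊞ P')
    (biprod.fst : P ⊞ P' ⟶ P) (by simp)) biprod.snd biprod.inl (by simp) (by simp)
      (by ext <;> simp)).shortExact

lemma horseshoe (hf : IsRes f a) (g : P' ⟶ Q') (hg : g ≫ b = 0) (t : RExt R A B) :
    ∃ w : P ⟶ B, ∀ u : P ⟶ Q', u ≫ b = w → ∃ r, ExRel a b (Eu f g u) t r := by
  have pQ := hf.pQ
  have : Epi t.p := t.ex.epi_g
  let σ : Q ⟶ t.E := Projective.factorThru a t.p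
  have hσ : σ ≫ t.p = a := Projective.factorThru_comp _ _
  obtain ⟨w, hw⟩ := ses_lift t.ex (f ≫ σ) (by rw [Category.assoc, hσ, hf.w])
  refine ⟨w, fun u hu => ⟨(biprod.desc σ (b ≫ t.i) : Q ⊞ Q' ⟶ t.E), ?_, ?_, ?_⟩⟩
  · change (biprod.inr : Q' ⟶ Q ⊞ Q') ≫ biprod.desc σ (b ≫ t.i) = _
    simp
  · change biprod.desc σ (b ≫ t.i) ≫ t.p = (biprod.fst : Q ⊞ Q' ⟶ Q) ≫ a
    ext <;> simp [hσ, t.w]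
  · change biprod.desc (biprod.lift f (-u)) (biprod.lift 0 g) ≫ biprod.desc σ (b ≫ t.i) = 0
    ext
    · simp [← hw, reassoc_of% hu, biprod.lift_desc]
    · simp [reassoc_of% hg, biprod.lift_desc]

/-- The relation of compatibility, with the comparison morphism hidden. -/
def ExR (a : Q ⟶ A) (b : Q' ⟶ B) (s : ExtSES (Cf R f) (Cf R g)) (t : RExt R A B) : Prop :=
  ∃ r, ExRel a b s t r

lemma extEquiv_equivalence (M N : Z2Cx R) : Equivalence (ExtEquiv M N) where
  refl s := ⟨Iso.refl _, by simp, by simp⟩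
  symm := by
    rintro s t ⟨φ, h1, h2⟩
    exact ⟨φ.symm, by simp [← h1], by simp [← h2]⟩
  trans := by
    rintro s t u ⟨φ, h1, h2⟩ ⟨ψ, h3, h4⟩
    exact ⟨φ ≪≫ ψ, by simp [reassoc_of% h1, h3], by simp [h4, h2]⟩

lemma rextEq_equivalence (A B : R) : Equivalence (RExtEq R A B) where
  refl s := ⟨Iso.refl _, by simp, by simp⟩
  symm := by
    rintro s t ⟨φ, h1, h2⟩
    exact ⟨φ.symm, by simp [← h1], by simp [← h2]⟩
  trans := by
    rintro s t u ⟨φ, h1, h2⟩ ⟨ψ, h3, h4⟩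
    exact ⟨φ ≪≫ ψ, by simp [reassoc_of% h1, h3], by simp [h4, h2]⟩

lemma quot_eq_iff {X : Type*} {r : X → X → Prop} (hr : Equivalence r) (x y : X) :
    Quot.mk r x = Quot.mk r y ↔ r x y := by
  rw [Quot.eq, hr.eqvGen_iff]

lemma exR_right (hf : IsRes f a) (hg : IsRes g b) (t : RExt R A B) :
    ∃ s : ExtSES (Cf R f) (Cf R g), ExR a b s t := by
  obtain ⟨w, hw⟩ := horseshoe hf g hg.w t
  have : Epi b := hg.ex.epi_g
  have := hf.pP
  exact ⟨_, hw (Projective.factorThru w b) (Projective.factorThru_comp _ _)⟩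

/-- The bijection between extension classes of complexes and extension classes of objects. -/
lemma extBij (hf : IsRes f a) (hg : IsRes g b) :
    ∃ e : ExtCl (Cf R f) (Cf R g) ≃ RExtCl R A B, ∀ (s : ExtSES (Cf R f) (Cf R g)),
      ∃ t : RExt R A B, e (Quot.mk _ s) = Quot.mk _ t ∧ ExR a b s t := by
  choose F hF using fun s : ExtSES (Cf R f) (Cf R g) => exRel_exists hf hg s
  have key : ∀ {s s' t t'}, ExR a b s t → ExR a b s' t' →
      (ExtEquiv (Cf R f) (Cf R g) s s' ↔ RExtEq R A B t t') := by
    rintro s s' t t' ⟨r, h⟩ ⟨r', h'⟩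
    exact ⟨exRel_fwd hf hg h h', exRel_bwd hf hg h h'⟩
  let Φ : ExtCl (Cf R f) (Cf R g) → RExtCl R A B :=
    Quot.lift (fun s => Quot.mk _ (F s)) (fun s s' h => Quot.sound ((key (hF s) (hF s')).1 h))
  have hΦ : Function.Bijective Φ := by
    constructor
    · rintro ⟨s⟩ ⟨s'⟩ h
      have h : Quot.mk (RExtEq R A B) (F s) = Quot.mk _ (F s') := h
      rw [quot_eq_iff (rextEq_equivalence A B)] at h
      exact Quot.sound ((key (hF s) (hF s')).2 h)
    · rintro ⟨t⟩
      obtain ⟨s, hs⟩ := exR_right hf hg t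
      exact ⟨Quot.mk _ s, Quot.sound ((key (hF s) hs).1 ((extEquiv_equivalence _ _).refl s))⟩
  exact ⟨Equiv.ofBijective Φ hΦ, fun s => ⟨F s, rfl, hF s⟩⟩

lemma rext_finite (hf : IsRes f a) (hg : IsRes g b) (hB : IsFinHom R B) :
    Finite (RExtCl R A B) := by
  choose w hw using fun t : RExt R A B => horseshoe hf g hg.w t
  have : Finite (P ⟶ B) := hB P
  have : Epi b := hg.ex.epi_g
  have := hf.pP
  refine Finite.of_injective (fun x : RExtCl R A B => w (Quot.out x)) ?_
  intro x y h
  rw [← Quot.out_eq x, ← Quot.out_eq y]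
  apply Quot.sound
  dsimp only at h
  obtain ⟨r, hr⟩ := hw _ (Projective.factorThru (w (Quot.out x)) b) (Projective.factorThru_comp _ _)
  obtain ⟨r', hr'⟩ := hw (Quot.out y) (Projective.factorThru (w (Quot.out x)) b)
    (by rw [← h]; exact Projective.factorThru_comp _ _)
  exact exRel_fwd hf hg hr hr' ((extEquiv_equivalence _ _).refl _)

lemma ext_finHom (hA : IsFinHom R A) (hB : IsFinHom R B) (t : RExt R A B) : IsFinHom R t.E := by
  intro M
  have := hA M
  have := hB M
  have hs := t.ex
  let F : (M ⟶ t.E) → (M ⟶ A) := fun x => x ≫ t.p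
  choose G hG using fun y : Set.range F => y.2
  choose H hH using fun x : M ⟶ t.E => ses_lift hs (x - G ⟨F x, x, rfl⟩) (by
    have := hG ⟨F x, x, rfl⟩
    dsimp only [F] at this
    rw [Preadditive.sub_comp, this, sub_self])
  refine Finite.of_injective (fun x : M ⟶ t.E => (F x, H x)) ?_
  intro x y h
  simp only [Prod.mk.injEq] at h
  obtain ⟨h1, h2⟩ := h
  have e1 := hH x
  have e2 := hH y
  have e3 : G ⟨F x, x, rfl⟩ = G ⟨F y, y, rfl⟩ := by simp only [h1]
  rw [h2, e2, e3] at e1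
  exact (sub_left_injective e1).symm
end

/-! ### Grothendieck group and homology -/

lemma cls_ses {X Y Z : R} {i : X ⟶ Y} {p : Y ⟶ Z} {w : i ≫ p = 0}
    (h : (ShortComplex.mk i p w).ShortExact) : K0.cls R Y = K0.cls R X + K0.cls R Z := by
  have h1 : FreeAbelianGroup.of Y - FreeAbelianGroup.of X - FreeAbelianGroup.of Z ∈
      AddSubgroup.closure (sesSet R) := AddSubgroup.subset_closure ⟨_, h, rfl⟩
  have h2 := (QuotientAddGroup.eq_zero_iff _).2 h1
  rw [QuotientAddGroup.mk_sub, QuotientAddGroup.mk_sub] at h2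
  change K0.cls R Y - K0.cls R X - K0.cls R Z = 0 at h2
  rw [sub_sub, sub_eq_zero] at h2
  exact h2

lemma cls_zero {Z : R} (hZ : IsZero Z) : K0.cls R Z = 0 := by
  have h : (ShortComplex.mk (0 : Z ⟶ Z) (0 : Z ⟶ Z) (by simp)).ShortExact := by
    refine ses_mk ⟨fun _ _ _ => hZ.eq_of_tgt _ _⟩ ⟨fun _ _ _ => hZ.eq_of_src _ _⟩ ?_
    intro T x _
    exact ⟨T, 𝟙 T, inferInstance, x, hZ.eq_of_tgt _ _⟩
  have := cls_ses h
  simpa using this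

open ZeroObject in
lemma cls_iso {X Y : R} (e : X ≅ Y) : K0.cls R X = K0.cls R Y := by
  have hZ : IsZero (0 : R) := isZero_zero R
  have h : (ShortComplex.mk (0 : (0 : R) ⟶ X) e.hom (by simp)).ShortExact := by
    refine ses_mk ⟨fun _ _ _ => hZ.eq_of_tgt _ _⟩ inferInstance ?_
    intro T x hx
    refine ⟨T, 𝟙 T, inferInstance, 0, ?_⟩
    have : x = 0 := by rw [← cancel_mono e.hom, hx, zero_comp]
    simp [this]
  have := cls_ses h
  rw [cls_zero hZ, zero_add] at this
  exact this

lemma cls_biprod (X Y : R) : K0.cls R (X ⊞ Y) = K0.cls R X + K0.cls R Y :=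
  cls_ses (ShortComplex.Splitting.mk (S := ShortComplex.mk (biprod.inl : X ⟶ X ⊞ Y)
    (biprod.snd : X ⊞ Y ⟶ Y) (by simp)) biprod.fst biprod.inr (by simp) (by simp)
      (by ext <;> simp)).shortExact

lemma finHom_iso {X Y : R} (e : X ≅ Y) (h : IsFinHom R X) : IsFinHom R Y := by
  intro M
  have := h M
  exact Finite.of_injective (fun x : M ⟶ Y => x ≫ e.inv) fun x y h => by simpa using h

lemma finHom_zero {X : R} (h : IsZero X) : IsFinHom R X := by
  intro M
  have : Subsingleton (M ⟶ X) := ⟨fun _ _ => h.eq_of_tgt _ _⟩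
  infer_instance

section
variable {M N : Z2Cx R} {A B C : R} {r : M.X0 ⟶ A} {r' : N.X0 ⟶ B}

lemma H0_iso (h : IsRes M.d1 r) : Nonempty (H0 R M ≅ A) := by
  have : Epi r := h.ex.epi_g
  exact ⟨(ShortComplex.LeftHomologyData.ofIsColimitCokernelCofork
    (ShortComplex.mk M.d1 M.d0 M.d10) (d0_zero h) _ h.ex.gIsCokernel).homologyIso⟩

lemma H1_zero (h : IsRes M.d1 r) : IsZero (H1 R M) := by
  have hm : Mono M.d1 := h.ex.mono_f
  refine (ShortComplex.exact_iff_isZero_homology _).1 ?_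
  rw [ShortComplex.exact_iff_mono _ (d0_zero h)]
  exact hm

lemma finCx_of (h : IsRes M.d1 r) (hA : IsFinHom R A) : FinCx R M :=
  ⟨h.pQ, h.pP, finHom_iso (H0_iso h).some.symm hA, finHom_zero (H1_zero h)⟩

lemma clsOf_eq (h : IsRes M.d1 r) : clsOf R M = K0.cls R A := by
  rw [clsOf, cls_ses h.ex, add_sub_cancel_left]

lemma dec_eq (dd : DecData R) (h : IsRes M.d1 r) :
    dd.cplus M = K0.cls R M.X1 ∧ dd.cminus M = 0 := by
  obtain ⟨P, Q, P', Q', f, g, -, -, -, -, hf, hg, ⟨e⟩, h1, h2⟩ := dd.spec M h.pQ h.pP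
  have hm : Mono M.d1 := h.ex.mono_f
  let e0 : M.X0 ≅ Q ⊞ P' := isoX0 e
  let e1 : M.X1 ≅ P ⊞ Q' := isoX1 e
  have c0 : M.d0 ≫ e1.hom = e0.hom ≫ biprod.map 0 (-g) := Hom.comm0 e.hom
  have c1 : M.d1 ≫ e0.hom = e1.hom ≫ biprod.map f (-0) := Hom.comm1 e.hom
  have g0 : g = 0 := by
    rw [d0_zero h, zero_comp] at c0
    have c2 : (biprod.map 0 (-g) : Q ⊞ P' ⟶ P ⊞ Q') = 0 := by
      rw [← cancel_epi e0.hom, ← c0, comp_zero]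
    have c3 : biprod.inr ≫ (biprod.map 0 (-g) : Q ⊞ P' ⟶ P ⊞ Q') ≫ biprod.snd = 0 := by
      rw [c2]; simp
    simpa using c3
  have zP' : IsZero P' := by
    rw [IsZero.iff_id_eq_zero, ← cancel_mono g, g0]; simp
  have zQ' : IsZero Q' := by
    have hm2 : Mono (biprod.map f (-0) : P ⊞ Q' ⟶ Q ⊞ P') := by
      have : (biprod.map f (-0) : P ⊞ Q' ⟶ Q ⊞ P') = e1.inv ≫ M.d1 ≫ e0.hom := by
        rw [c1]; simp
      rw [this]; infer_instance
    have h3 : (biprod.inr : Q' ⟶ P ⊞ Q') = 0 := by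
      rw [← cancel_mono (biprod.map f (-0) : P ⊞ Q' ⟶ Q ⊞ P')]; simp
    rw [IsZero.iff_id_eq_zero, ← biprod.inr_snd (X := P) (Y := Q'), h3, zero_comp]
  constructor
  · rw [h1, cls_iso e1, cls_biprod, cls_zero zQ', add_zero]
  · rw [h2, cls_zero zP']

lemma card_Hcx (h : IsRes M.d1 r) (h' : IsRes N.d1 r') :
    Nat.card (Hcx R M ⟶ Hcx R N) = Nat.card (A ⟶ B) := by
  obtain ⟨e⟩ := H0_iso h
  obtain ⟨e'⟩ := H0_iso h'
  refine Nat.card_congr (Equiv.trans (β := (H0 R M ⟶ H0 R N)) ?_ (Iso.homCongr e e'))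
  exact
    { toFun := fun x => Hom.f0 x
      invFun := fun y => (⟨y, 0, zero_comp.trans comp_zero.symm, zero_comp.trans comp_zero.symm⟩ : Z2Cx.Hom (Hcx R M) (Hcx R N))
      left_inv := fun x => by
        apply Hom.ext
        · rfl
        · exact (H1_zero h).eq_of_src _ _
      right_inv := fun y => rfl }

lemma hVal_eq (S : DHSetting k R) (h : IsRes M.d1 r) (h' : IsRes N.d1 r') :
    hVal S.ed S.dd M N = S.v ^ ((2 * S.ed.eQ (K0.cls R M.X0) (K0.cls R N.X1) : ℚ) : ℝ) *
      (Nat.card (A ⟶ B) : ℝ) := by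
  obtain ⟨h1, h2⟩ := dec_eq S.dd h
  obtain ⟨h1', h2'⟩ := dec_eq S.dd h'
  rw [hVal, card_Hcx h h', mu, h1, h2, h1', h2', ← S.v_sq, ← Real.rpow_natCast,
    ← Real.rpow_mul S.v_pos.le]
  simp

end

lemma fc2c_inj : Function.Injective (fc2c R) := by
  have h1 : Equivalence (fun M N : FCx R => Nonempty (M.1 ≅ N.1)) :=
    ⟨fun _ => ⟨Iso.refl _⟩, fun ⟨e⟩ => ⟨e.symm⟩, fun ⟨e⟩ ⟨e'⟩ => ⟨e ≪≫ e'⟩⟩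
  have h2 : Equivalence (cxRel R) :=
    ⟨fun _ => ⟨Iso.refl _⟩, fun ⟨e⟩ => ⟨e.symm⟩, fun ⟨e⟩ ⟨e'⟩ => ⟨e ≪≫ e'⟩⟩
  rintro ⟨M⟩ ⟨N⟩ h
  have h : Quot.mk (cxRel R) M.1 = Quot.mk (cxRel R) N.1 := h
  rw [quot_eq_iff h2] at h
  exact Quot.sound h

lemma card_fib {X Y : Type*} [Fintype X] (m : X → Y) (c : Y) :
    Nat.card {x // m x = c} = (Finset.univ.filter (fun x => m x = c)).card := by
  rw [Nat.card_eq_fintype_card, Fintype.card_subtype]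

section
variable {P P' Q Q' A B : R} {f : P ⟶ Q} {g : P' ⟶ Q'} {a : Q ⟶ A} {b : Q' ⟶ B}

lemma IsRes.cf (h : IsRes f a) : IsRes (Cf R f).d1 (show (Cf R f).X0 ⟶ A from a) := h

lemma mid_finCx (hf : IsRes f a) (hg : IsRes g b) (hA : IsFinHom R A) (hB : IsFinHom R B)
    (s : ExtSES (Cf R f) (Cf R g)) : FinCx R s.E := by
  obtain ⟨t, r, h⟩ := exRel_exists hf hg s
  exact finCx_of (h.isRes hf hg) (ext_finHom hA hB t)

/-- An object of `C_fin(P)`. -/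
def mkF (M : Z2Cx R) (h : FinCx R M) : FCx R := ⟨M, h⟩

/-- The class of the middle term. -/
def fmid (hfin : ∀ s : ExtSES (Cf R f) (Cf R g), FinCx R s.E) :
    ExtCl (Cf R f) (Cf R g) → FCls R :=
  Quot.lift (fun s => fcls R (mkF _ (hfin s))) (fun _ _ h => by
    obtain ⟨φ, -, -⟩ := h
    exact Quot.sound ⟨φ⟩)

lemma hall_prod (S : DHSetting k R) (hf : IsRes f a) (hg : IsRes g b)
    (hfin : ∀ s : ExtSES (Cf R f) (Cf R g), FinCx R s.E)
    (hM : FinCx R (Cf R f)) (hN : FinCx R (Cf R g)) [Fintype (ExtCl (Cf R f) (Cf R g))] :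
    S.mulH (Finsupp.single (fcls R (mkF _ hM)) 1) (Finsupp.single (fcls R (mkF _ hN)) 1) =
      (((S.v ^ ((S.ed.eQ (K0.cls R Q) (K0.cls R Q') + S.ed.eQ (K0.cls R P) (K0.cls R P') -
        2 * S.ed.eQ (K0.cls R Q) (K0.cls R P') : ℚ) : ℝ) / (Nat.card (A ⟶ B) : ℝ) : ℝ)) : ℂ) •
      ∑ x : ExtCl (Cf R f) (Cf R g), Finsupp.single (fmid hfin x) (1 : ℂ) := by
  ext c
  have hcnt : extCount R (Cf R f) (Cf R g) (fc2c R c) =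
      (Finset.univ.filter (fun x => fmid hfin x = c)).card := by
    rw [← card_fib, extCount]
    refine Nat.card_congr (Equiv.subtypeEquivRight fun x => ?_)
    rw [← fc2c_inj.eq_iff]
    obtain ⟨s⟩ := x
    rfl
  rw [S.mulH_single]
  change hallCoeff S.v S.ed S.dd (Cf R f) (Cf R g) (fc2c R c) = _
  rw [hallCoeff, hcnt, hVal_eq S hf.cf hg.cf, Finsupp.smul_apply,
    Finsupp.finsetSum_apply]
  simp only [Finsupp.single_apply, Finset.sum_boole, smul_eq_mul]
  rw [Rat.cast_sub, Real.rpow_sub S.v_pos]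
  have : S.v ^ ((2 * S.ed.eQ (K0.cls R Q) (K0.cls R P') : ℚ) : ℝ) ≠ 0 :=
    (Real.rpow_pos_of_pos S.v_pos _).ne'
  rw [← Complex.ofReal_natCast, ← Complex.ofReal_mul]
  congr 1
  change S.v ^ ((S.ed.eQ (K0.cls R Q) (K0.cls R Q') + S.ed.eQ (K0.cls R P) (K0.cls R P') : ℚ) : ℝ)
    * _ / (S.v ^ ((2 * S.ed.eQ (K0.cls R Q) (K0.cls R P') : ℚ) : ℝ) * _) = _
  rw [div_div, mul_div_right_comm]

end

/-! ### Computations in the localized Hall algebra -/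

/-- Powers of `v`. -/
def vp (S : DHSetting k R) (x : ℚ) : ℂ := ((S.v ^ ((x : ℚ) : ℝ) : ℝ) : ℂ)

lemma vp_mul (S : DHSetting k R) (x y : ℚ) : vp S x * vp S y = vp S (x + y) := by
  rw [vp, vp, vp, ← Complex.ofReal_mul, ← Real.rpow_add S.v_pos, Rat.cast_add]

lemma vp_zero (S : DHSetting k R) : vp S 0 = 1 := by simp [vp]

/-- The image in `DH(R)` of the class of a complex. -/
def br (S : DHSetting k R) (M : Z2Cx R) (h : FinCx R M) : S.D :=
  S.loc (Finsupp.single (fcls R (mkF M h)) 1)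

/-- The normalized class of a resolution. -/
def Nrm (S : DHSetting k R) (M : Z2Cx R) (h : FinCx R M) : S.D :=
  vp S (-(S.ed.eQ (clsOf R M) (K0.cls R M.X1))) • S.mulD (br S M h) (S.KK (-(K0.cls R M.X1), 0))

lemma Eelt_eq (S : DHSetting k R) {M : Z2Cx R} {A : R} {r : M.X0 ⟶ A} (hr : IsRes M.d1 r)
    (h : FinCx R M) : Eelt S M h = Nrm S M h := by
  obtain ⟨h1, h2⟩ := dec_eq S.dd hr
  change vp S (S.ed.eQ (S.dd.cplus M - S.dd.cminus M) (clsOf R M)) •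
    S.mulD (S.KK (-(S.dd.cplus M), -(S.dd.cminus M)))
      (S.loc (Finsupp.single (fcls R (mkF M h)) 1)) = _
  rw [S.comm_rule, h1, h2]
  change _ • vp S (sForm k R S.ed (-K0.cls R M.X1 - -0) (clsOf R M)) • S.mulD (br S M h) _ = _
  rw [smul_smul, vp_mul, Nrm, neg_zero]
  congr 2
  simp [sForm]

lemma Nrm_iso (S : DHSetting k R) {M N : Z2Cx R} (e : M ≅ N) (h : FinCx R M) (h' : FinCx R N) :
    Nrm S M h = Nrm S N h' := by
  have h1 : fcls R (mkF M h) = fcls R (mkF N h') := Quot.sound ⟨e⟩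
  rw [Nrm, Nrm, br, br, clsOf, clsOf, h1, cls_iso (isoX0 e), cls_iso (isoX1 e)]

open ZeroObject

lemma isRes_id {T : R} (hT : Projective T) : IsRes (𝟙 T) (0 : T ⟶ (0 : R)) := by
  refine ⟨hT, hT, by simp, ?_⟩
  refine ses_mk inferInstance ⟨fun _ _ _ => (isZero_zero R).eq_of_src _ _⟩ ?_
  intro X x _
  exact ⟨X, 𝟙 X, inferInstance, x, by simp⟩

lemma prodK (S : DHSetting k R) {T : R} (hT : Projective T) (h : FinCx R (Cf R (𝟙 T)))
    (x : (FCls R) →₀ ℂ) (α : K0 R) :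
    S.mulD (S.loc x) (S.KK (α, 0)) =
      S.mulD (S.loc (S.mulH x (Finsupp.single (fcls R (mkF _ h)) 1)))
        (S.KK (α + -(K0.cls R T), 0)) := by
  have h1 := S.mul_general x (mkF _ h) α 0 (-(K0.cls R T)) 0
  have h2 : S.loc (Finsupp.single (fcls R (mkF _ h)) 1) = S.KK (K0.cls R T, 0) := S.KK_P T hT h
  have h3 : clsOf R (mkF _ h).1 = 0 := sub_self (K0.cls R T)
  rw [h2, S.KK_mul, h3] at h1
  have h4 : ((K0.cls R T, (0 : K0 R)) + (-(K0.cls R T), (0 : K0 R))) = 0 := by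
    ext <;> simp
  rw [h4, S.KK_zero, S.mul_one] at h1
  rw [h1]
  simp [sForm]

section
variable {P P' Q Q' A B : R} {f : P ⟶ Q} {g : P' ⟶ Q'} {a : Q ⟶ A} {b : Q' ⟶ B}

lemma rext_subsingleton (A : R) : Subsingleton (RExtCl R A (0 : R)) := by
  have key : ∀ s : RExt R A (0 : R), IsIso s.p := by
    intro s
    have : Epi s.p := s.ex.epi_g
    have : Mono s.p := by
      refine Preadditive.mono_of_cancel_zero _ fun {T} x hx => ?_
      obtain ⟨y, rfl⟩ := ses_lift s.ex x hx
      rw [(isZero_zero R).eq_of_tgt y 0, zero_comp]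
    exact isIso_of_mono_of_epi _
  refine ⟨?_⟩
  rintro ⟨s⟩ ⟨t⟩
  have := key s
  have := key t
  exact Quot.sound (rext_iso s t (s.p ≫ inv t.p) ((isZero_zero R).eq_of_src _ _) (by simp))

lemma Nrm_K (S : DHSetting k R) (hf : IsRes f a) (hA : IsFinHom R A) {T : R} (hT : Projective T)
    (s : ExtSES (Cf R f) (Cf R (𝟙 T))) (h : FinCx R (Cf R f)) (h' : FinCx R s.E) :
    Nrm S (Cf R f) h = Nrm S s.E h' := by
  have hg := isRes_id hT
  have h0 : IsFinHom R (0 : R) := finHom_zero (isZero_zero R)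
  have hK : FinCx R (Cf R (𝟙 T)) := finCx_of hg.cf h0
  have hfin := mid_finCx hf hg hA h0
  obtain ⟨e, -⟩ := extBij hf hg
  have := rext_subsingleton A
  have ss : Subsingleton (ExtCl (Cf R f) (Cf R (𝟙 T))) := e.subsingleton
  have : Fintype (ExtCl (Cf R f) (Cf R (𝟙 T))) := Fintype.ofSubsingleton (Quot.mk _ s)
  have hp := hall_prod S hf hg hfin h hK
  let z : ExtCl (Cf R f) (Cf R (𝟙 T)) := Quot.mk _ s
  rw [Fintype.sum_subsingleton _ z] at hp
  have c1 : Nat.card (A ⟶ (0 : R)) = 1 := by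
    have : Subsingleton (A ⟶ (0 : R)) := ⟨fun _ _ => (isZero_zero R).eq_of_tgt _ _⟩
    exact Nat.card_of_subsingleton 0
  rw [c1, Nat.cast_one, div_one] at hp
  have e1 : K0.cls R s.E.X1 = K0.cls R T + K0.cls R P := cls_ses s.ex1
  have e0 : K0.cls R s.E.X0 = K0.cls R T + K0.cls R Q := cls_ses s.ex0
  have e2 : clsOf R (Cf R f) = K0.cls R Q - K0.cls R P := rfl
  have e3 : K0.cls R (Cf R f).X1 = K0.cls R P := rfl
  rw [Nrm, br, prodK S hT hK, hp, Nrm, e2, clsOf, e1, e0, e3]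
  change _ • S.mulD (S.loc (vp S _ • Finsupp.single (fcls R (mkF s.E _)) 1)) _ =
    _ • S.mulD (S.loc (Finsupp.single (fcls R (mkF s.E _)) 1)) _
  rw [map_smul, map_smul, LinearMap.smul_apply, smul_smul, vp_mul]
  congr 2
  · congr 1
    simp only [map_add, map_sub, AddMonoidHom.add_apply, AddMonoidHom.sub_apply]
    ring

lemma iso_of_res {M N : Z2Cx R} {C : R} {r : M.X0 ⟶ C} {r' : N.X0 ⟶ C} (h : IsRes M.d1 r)
    (h' : IsRes N.d1 r') (e : M.X0 ≅ N.X0) (he : e.hom ≫ r' = r) : Nonempty (M ≅ N) := by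
  have : Mono M.d1 := h.ex.mono_f
  have : Mono N.d1 := h'.ex.mono_f
  obtain ⟨x, hx⟩ := ses_lift h'.ex (M.d1 ≫ e.hom) (by rw [Category.assoc, he, h.w])
  obtain ⟨y, hy⟩ := ses_lift h.ex (N.d1 ≫ e.inv) (by rw [← he]; simp [h'.w])
  refine ⟨cxIso e ⟨x, y, ?_, ?_⟩ ?_ hx.symm⟩
  · rw [← cancel_mono M.d1, Category.assoc, hy, reassoc_of% hx]; simp
  · rw [← cancel_mono N.d1, Category.assoc, hx, reassoc_of% hy]; simp
  · rw [d0_zero h, d0_zero h']; simp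

lemma isRes_Eu (hf : IsRes f a) {T : R} (hT : Projective T) :
    IsRes (Eu f (𝟙 T) 0).E.d1 (show (Eu f (𝟙 T) 0).E.X0 ⟶ A from biprod.desc a 0) := by
  have h0 := isZero_zero R
  let t : RExt R A (0 : R) := ⟨A, 0, 𝟙 A, by simp, by
    refine ses_mk ⟨fun _ _ _ => h0.eq_of_tgt _ _⟩ inferInstance ?_
    intro X x hx
    exact ⟨X, 𝟙 X, inferInstance, 0, by simpa using hx⟩⟩
  have h : ExRel a (0 : T ⟶ (0 : R)) (Eu f (𝟙 T) 0) t (biprod.desc a 0 : Q ⊞ T ⟶ A) := by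
    refine ⟨?_, ?_, ?_⟩
    · change (biprod.inr : T ⟶ Q ⊞ T) ≫ biprod.desc a 0 = 0 ≫ 0
      simp
    · change biprod.desc a 0 ≫ 𝟙 A = (biprod.fst : Q ⊞ T ⟶ Q) ≫ a
      ext <;> simp
    · change biprod.desc (biprod.lift f (-0)) (biprod.lift 0 (𝟙 T)) ≫ biprod.desc a 0 = 0
      ext
      · simp [biprod.lift_desc, hf.w]
      · simp [biprod.lift_desc]
  exact h.isRes hf (isRes_id hT)

/-- Schanuel: the normalized class only depends on the resolved object. -/
lemma Nrm_eq (S : DHSetting k R) {f : P ⟶ Q} {f' : P' ⟶ Q'} {a : Q ⟶ A} {a' : Q' ⟶ A}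
    (hf : IsRes f a) (hf' : IsRes f' a') (hA : IsFinHom R A) (h : FinCx R (Cf R f))
    (h' : FinCx R (Cf R f')) : Nrm S (Cf R f) h = Nrm S (Cf R f') h' := by
  have pQ := hf.pQ
  have pQ' := hf'.pQ
  have : Epi a := hf.ex.epi_g
  have : Epi a' := hf'.ex.epi_g
  have r1 := isRes_Eu hf pQ'
  have r2 := isRes_Eu hf' pQ
  let x : Q ⟶ Q' := Projective.factorThru a a'
  have hx : x ≫ a' = a := Projective.factorThru_comp _ _
  let y : Q' ⟶ Q := Projective.factorThru a' a
  have hy : y ≫ a = a' := Projective.factorThru_comp _ _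
  let e : Q ⊞ Q' ≅ Q' ⊞ Q :=
    { hom := biprod.desc (biprod.lift x (𝟙 _)) (biprod.lift (𝟙 _ - y ≫ x) (-y))
      inv := biprod.desc (biprod.lift y (𝟙 _)) (biprod.lift (𝟙 _ - x ≫ y) (-x))
      hom_inv_id := by
        ext <;> simp [biprod.lift_desc]
      inv_hom_id := by
        ext <;> simp [biprod.lift_desc] }
  have he : e.hom ≫ biprod.desc a' 0 = biprod.desc a 0 := by
    ext <;> simp [e, biprod.lift_desc, hx, hy]
  obtain ⟨E⟩ := iso_of_res r1 r2 e he
  rw [Nrm_K S hf hA pQ' (Eu f (𝟙 Q') 0) h (finCx_of r1 hA),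
    Nrm_K S hf' hA pQ (Eu f' (𝟙 Q) 0) h' (finCx_of r2 hA)]
  exact Nrm_iso S E _ _

end

lemma Nrm_eq' (S : DHSetting k R) {M N : Z2Cx R} {A : R} {r : M.X0 ⟶ A} {r' : N.X0 ⟶ A}
    (hM : IsRes M.d1 r) (hN : IsRes N.d1 r') (hA : IsFinHom R A) (h : FinCx R M)
    (h' : FinCx R N) : Nrm S M h = Nrm S N h' := by
  have e : ∀ {M : Z2Cx R} {r : M.X0 ⟶ A}, IsRes M.d1 r → Nonempty (M ≅ Cf R M.d1) := by
    intro M r hM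
    exact ⟨cxIso (N := Cf R M.d1) (Iso.refl M.X0) (Iso.refl M.X1)
      (by rw [d0_zero hM]; exact zero_comp.trans comp_zero.symm)
      ((Category.comp_id _).trans (Category.id_comp _).symm)⟩
  obtain ⟨e1⟩ := e hM
  obtain ⟨e2⟩ := e hN
  have f1 : FinCx R (Cf R M.d1) := finCx_of hM.cf hA
  have f2 : FinCx R (Cf R N.d1) := finCx_of hN.cf hA
  rw [Nrm_iso S e1 h f1, Nrm_iso S e2 h' f2]
  exact Nrm_eq S hM hN hA f1 f2

lemma IsRes.iso {P Q A A' : R} {f : P ⟶ Q} {a : Q ⟶ A} (h : IsRes f a) (e : A ≅ A') :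
    IsRes f (a ≫ e.hom) := by
  have : Epi a := h.ex.epi_g
  refine ⟨h.pP, h.pQ, by rw [← Category.assoc, h.w, zero_comp], ?_⟩
  refine ses_mk h.ex.mono_f inferInstance ?_
  intro T x hx
  obtain ⟨y, hy⟩ := ses_lift h.ex x (by rw [← cancel_mono e.hom, Category.assoc, hx, zero_comp])
  exact ⟨T, 𝟙 T, inferInstance, y, by simp [hy]⟩

lemma finsum_fib {X : Type*} {Y : Type*} {D : Type*} [AddCommGroup D] [Module ℂ D] [Fintype X]
    (m : X → Y) (α β : ℂ) (G : Y → D) :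
    ∑ᶠ c : Y, ((α * (Nat.card {x // m x = c} : ℂ) / β) • G c) = ∑ x : X, (α / β) • G (m x) := by
  rw [finsum_eq_sum_of_support_subset (s := Finset.univ.image m)]
  · rw [Finset.sum_comp (fun c => (α / β) • G c) m]
    refine Finset.sum_congr rfl fun c _ => ?_
    rw [card_fib, ← Nat.cast_smul_eq_nsmul ℂ, smul_smul]
    congr 1
    ring
  · intro c hc
    by_contra hn
    apply hc
    have : IsEmpty {x // m x = c} := ⟨fun x => hn (by simpa using ⟨x.1, x.2⟩)⟩
    simp

lemma rcls_iso {X Y : R} (h : rcls R X = rcls R Y) : Nonempty (X ≅ Y) := by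
  have h2 : Equivalence (fun X Y : R => Nonempty (X ≅ Y)) :=
    ⟨fun _ => ⟨Iso.refl _⟩, fun ⟨e⟩ => ⟨e.symm⟩, fun ⟨e⟩ ⟨e'⟩ => ⟨e ≪≫ e'⟩⟩
  exact (quot_eq_iff h2 X Y).1 h

theorem stmt12 (hH : Hereditary k R) (hc : CondC R) (hd : CondD R) (he : CondE R)
    (S : DHSetting k R)
    -- a fixed choice of projective resolution `0 → P_C → Q_C → C → 0` for each object
    (rP rQ : R → R) (rf : ∀ C : R, rP C ⟶ rQ C) (rπ : ∀ C : R, rQ C ⟶ C)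
    (hres : ∀ C : R, IsFinHom R C → Projective (rP C) ∧ Projective (rQ C) ∧
      ∃ w : rf C ≫ rπ C = 0, (ShortComplex.mk (rf C) (rπ C) w).ShortExact)
    (hfc : ∀ C : R, IsFinHom R C → FinCx R (Z2Cx.Cf R (rf C)))
    (A B : R) (hA : IsFinHom R A) (hB : IsFinHom R B) :
    S.mulD (Eelt S (Z2Cx.Cf R (rf A)) (hfc A hA)) (Eelt S (Z2Cx.Cf R (rf B)) (hfc B hB)) =
      ∑ᶠ c : RCls R,
        ((((S.v ^ ((S.ed.eQ (K0.cls R A) (K0.cls R B) : ℚ) : ℝ) : ℝ) : ℂ) *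
            (rExtCount R A B c : ℂ) / (Nat.card (A ⟶ B) : ℂ)) •
          (if h : FinCx R (Z2Cx.Cf R (rf (Quot.out c))) then
            Eelt S (Z2Cx.Cf R (rf (Quot.out c))) h else 0)) := by
  have res : ∀ C : R, IsFinHom R C → IsRes (rf C) (rπ C) := fun C hC =>
    ⟨(hres C hC).1, (hres C hC).2.1, (hres C hC).2.2.choose, (hres C hC).2.2.choose_spec⟩
  have hf := res A hA
  have hg := res B hB
  have hfin := mid_finCx hf hg hA hB
  have fR : Finite (RExtCl R A B) := rext_finite hf hg hB
  obtain ⟨e, he⟩ := extBij hf hg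
  have iR : Fintype (RExtCl R A B) := Fintype.ofFinite _
  have iC : Fintype (ExtCl (Cf R (rf A)) (Cf R (rf B))) := Fintype.ofEquiv _ e.symm
  let G : RCls R → S.D := fun c => if h : FinCx R (Z2Cx.Cf R (rf (Quot.out c))) then
            Eelt S (Z2Cx.Cf R (rf (Quot.out c))) h else 0
  have rhs := finsum_fib (rExtMid R (A := A) (B := B)) (vp S (S.ed.eQ (K0.cls R A) (K0.cls R B)))
    (Nat.card (A ⟶ B) : ℂ) G
  refine Eq.trans ?_ rhs.symm
  rw [← e.sum_comp, Eelt_eq S hf.cf, Eelt_eq S hg.cf]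
  have hp := hall_prod S hf hg hfin (hfc A hA) (hfc B hB)
  have hmul := S.mul_general (Finsupp.single (fcls R (mkF _ (hfc A hA))) 1) (mkF _ (hfc B hB))
    (-(K0.cls R (rP A))) 0 (-(K0.cls R (rP B))) 0
  change S.mulD (vp S (-(S.ed.eQ (clsOf R (Cf R (rf A))) (K0.cls R (rP A)))) •
      S.mulD (S.loc (Finsupp.single (fcls R (mkF _ (hfc A hA))) 1)) (S.KK (-(K0.cls R (rP A)), 0)))
    (vp S (-(S.ed.eQ (clsOf R (Cf R (rf B))) (K0.cls R (rP B)))) •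
      S.mulD (S.loc (Finsupp.single (fcls R (mkF _ (hfc B hB))) 1)) (S.KK (-(K0.cls R (rP B)), 0)))
    = _
  have cA : K0.cls R A = K0.cls R (rQ A) - K0.cls R (rP A) := by
    rw [cls_ses hf.ex, add_sub_cancel_left]
  have cB : K0.cls R B = K0.cls R (rQ B) - K0.cls R (rP B) := by
    rw [cls_ses hg.ex, add_sub_cancel_left]
  have cB' : clsOf R (mkF _ (hfc B hB)).1 = K0.cls R B := clsOf_eq hg.cf
  rw [map_smul, map_smul, LinearMap.smul_apply, hmul, hp, clsOf_eq hf.cf, clsOf_eq hg.cf, cB',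
    map_smul, map_sum, map_smul, map_sum, LinearMap.smul_apply, LinearMap.sum_apply,
    Finset.smul_sum, Finset.smul_sum, Finset.smul_sum, Finset.smul_sum]
  refine Finset.sum_congr rfl fun x _ => ?_
  obtain ⟨s⟩ := x
  obtain ⟨t, ht, r, hr⟩ := he s
  have hE := hr.isRes hf hg
  have hC := ext_finHom hA hB t
  have hG : G (rExtMid R (e (Quot.mk _ s))) = Nrm S s.E (hfin s) := by
    rw [ht]
    have h1 : rcls R (Quot.out (rcls R t.E)) = rcls R t.E := Quot.out_eq _
    obtain ⟨i⟩ := rcls_iso h1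
    have h2 : IsFinHom R (Quot.out (rcls R t.E)) := finHom_iso i.symm hC
    have h3 := (res _ h2).iso i
    change (if h : FinCx R (Z2Cx.Cf R (rf (Quot.out (rcls R t.E)))) then
            Eelt S (Z2Cx.Cf R (rf (Quot.out (rcls R t.E)))) h else 0) = _
    rw [dif_pos (hfc _ h2), Eelt_eq S h3.cf]
    exact Nrm_eq' S h3.cf hE hC _ _
  rw [hG, Nrm, clsOf_eq hE, cls_ses t.ex]
  have e1 : K0.cls R s.E.X1 = K0.cls R (rP B) + K0.cls R (rP A) := cls_ses s.ex1
  rw [e1]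
  change _ • _ • vp S _ • _ • S.mulD (br S s.E (hfin s)) _ = _
  have hk : (-K0.cls R (rP A) + -K0.cls R (rP B), (0 : K0 R) + 0) =
      (-(K0.cls R (rP B) + K0.cls R (rP A)), (0 : K0 R)) := by
    rw [add_zero, neg_add, add_comm]
  rw [hk, Complex.ofReal_div, Complex.ofReal_natCast]
  change _ • _ • vp S _ • (vp S _ / _) • S.mulD (br S s.E (hfin s)) _ = _
  simp only [smul_smul, ← mul_div_assoc, vp_mul, div_mul_eq_mul_div]
  congr 3
  simp only [sForm, cA, cB, map_add, map_sub, map_neg, AddMonoidHom.add_apply,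
    AddMonoidHom.sub_apply, AddMonoidHom.neg_apply, sub_zero]
  ring

end
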